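/- arXiv:2302.12456 — 2 statements merged into one kernel-verified Lean document; each statement's English description precedes it below -/
import Mathlib

section
/- Let A and B be d×d real symmetric positive definite matrices such that A − B is positive semidefinite. Then for every x ∈ ℝ^d, (xᵀ A x) · det(B) ≤ (xᵀ B x) · det(A); equivalently, for every x ≠ 0, (xᵀ A x)/(xᵀ B x) ≤ det(A)/det(B). -/
/-!
Since `B` is positive definite, `A` and `B` can be diagonalized simultaneously by congruence:
`B = Pᵀ P` and `A = Pᵀ diag(D) P` with `P` invertible (`exists_simultaneous_diagonalization`).
The hypothesis `A - B ⪰ 0` becomes `D i ≥ 1` for all `i`, and `det A = det B * ∏ i, D i`.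
With `y = P x` the claim reads `∑ i, D i * y i ^ 2 ≤ (∏ i, D i) * ∑ i, y i ^ 2`, which holds term
by term because each factor `D i` is at most the product of all of them.
-/

open Matrix

open scoped MatrixOrder in
/-- Simultaneous diagonalization by congruence: writing `B = Sᵀ S`, the spectral theorem is applied
to `S⁻ᵀ A S⁻¹ = U diag(D) Uᵀ`, and `P = Uᵀ S`. -/
lemma exists_simultaneous_diagonalization {n : Type*} [Fintype n] [DecidableEq n]
    {A B : Matrix n n ℝ} (hA : A.IsHermitian) (hB : B.PosDef) :
    ∃ (P : Matrix n n ℝ) (D : n → ℝ), IsUnit P ∧ B = star P * P ∧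
      A = star P * diagonal D * P := by
  obtain ⟨S, hS⟩ := CStarAlgebra.nonneg_iff_eq_star_mul_self.mp hB.posSemidef.nonneg
  have hSu : IsUnit S := by
    have h := (Matrix.isUnit_iff_isUnit_det _).mp hB.isUnit
    rw [hS, det_mul] at h
    exact (Matrix.isUnit_iff_isUnit_det _).mpr (isUnit_of_mul_isUnit_right h)
  have hSd : IsUnit S.det := (Matrix.isUnit_iff_isUnit_det _).mp hSu
  have hM : (star S⁻¹ * A * S⁻¹).IsHermitian := isHermitian_conjTranspose_mul_mul _ hA
  have hspec := hM.spectral_theorem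
  rw [Unitary.conjStarAlgAut_apply] at hspec
  set U : Matrix n n ℝ := (hM.eigenvectorUnitary : Matrix n n ℝ) with hU
  have hUU : U * star U = 1 := Unitary.coe_mul_star_self _
  have hUu : IsUnit (star U) := IsUnit.of_mul_eq_one_right U hUU
  have hSS : S⁻¹ * S = 1 := nonsing_inv_mul _ hSd
  have hSS' : star S * star S⁻¹ = 1 := by rw [← star_mul, hSS, star_one]
  refine ⟨star U * S, hM.eigenvalues, hUu.mul hSu, ?_, ?_⟩
  · rw [star_mul, star_star, mul_assoc, ← mul_assoc U, hUU, one_mul, hS]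
  · calc A = star S * (star S⁻¹ * A * S⁻¹) * S := by
          rw [mul_assoc (star S⁻¹), ← mul_assoc (star S), hSS', one_mul, mul_assoc, hSS, mul_one]
      _ = star S * (U * diagonal hM.eigenvalues * star U) * S :=
          congrArg (fun M => star S * M * S) hspec
      _ = _ := by
          rw [star_mul, star_star]
          simp only [mul_assoc]

lemma quadForm_diagonal_congr {n : Type*} [Fintype n] [DecidableEq n]
    (P : Matrix n n ℝ) (D x : n → ℝ) :
    x ⬝ᵥ (star P * diagonal D * P) *ᵥ x = ∑ i, D i * (P *ᵥ x) i ^ 2 := by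
  rw [← mulVec_mulVec, ← mulVec_mulVec, dotProduct_mulVec, star_eq_conjTranspose,
    conjTranspose_eq_transpose_of_trivial, vecMul_transpose]
  simp only [dotProduct, mulVec_diagonal]
  exact Finset.sum_congr rfl fun i _ => by ring

lemma le_prod_of_one_le {n : Type*} [Fintype n] [DecidableEq n] {D : n → ℝ}
    (hD : ∀ i, 1 ≤ D i) (i : n) : D i ≤ ∏ j, D j := by
  rw [← Finset.mul_prod_erase _ _ (Finset.mem_univ i)]
  exact le_mul_of_one_le_right (zero_le_one.trans (hD i))
    (Finset.one_le_prod fun j _ => hD j)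

lemma quadForm_mul_det_le {n : Type*} [Fintype n] [DecidableEq n] {A B : Matrix n n ℝ}
    (hA : A.IsHermitian) (hB : B.PosDef) (hAB : (A - B).PosSemidef) (x : n → ℝ) :
    (x ⬝ᵥ A *ᵥ x) * B.det ≤ (x ⬝ᵥ B *ᵥ x) * A.det := by
  obtain ⟨P, D, hP, hBP, hAP⟩ := exists_simultaneous_diagonalization hA hB
  have hBP' : B = star P * diagonal (fun _ => 1) * P := by
    rw [diagonal_one, mul_one, hBP]
  have hD : ∀ i, 1 ≤ D i := by
    have h : A - B = star P * diagonal (fun i => D i - 1) * P := by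
      rw [hAP, hBP', ← sub_mul, ← mul_sub, diagonal_sub]
    rw [h, hP.posSemidef_star_left_conjugate_iff, posSemidef_diagonal_iff] at hAB
    exact fun i => sub_nonneg.mp (hAB i)
  have hdet : A.det = B.det * ∏ i, D i := by
    rw [hAP, hBP, det_mul, det_mul, det_mul, det_diagonal]
    ring
  have hsum : x ⬝ᵥ A *ᵥ x ≤ (x ⬝ᵥ B *ᵥ x) * ∏ i, D i := by
    rw [hAP, hBP', quadForm_diagonal_congr, quadForm_diagonal_congr, Finset.sum_mul]
    refine Finset.sum_le_sum fun i _ => ?_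
    rw [one_mul, mul_comm]
    exact mul_le_mul_of_nonneg_left (le_prod_of_one_le hD i) (sq_nonneg _)
  calc (x ⬝ᵥ A *ᵥ x) * B.det ≤ ((x ⬝ᵥ B *ᵥ x) * ∏ i, D i) * B.det :=
        mul_le_mul_of_nonneg_right hsum hB.det_pos.le
    _ = (x ⬝ᵥ B *ᵥ x) * A.det := by rw [hdet]; ring

/-- If `A ⪰ B ≻ 0` then `xᵀAx · det B ≤ xᵀBx · det A`, equivalently for `x ≠ 0`
`(xᵀAx)/(xᵀBx) ≤ det A / det B`. -/
theorem stmt0 (d : ℕ) (A B : Matrix (Fin d) (Fin d) ℝ)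
    (hA : A.PosDef) (hB : B.PosDef) (hAB : (A - B).PosSemidef) :
    (∀ x : Fin d → ℝ, (x ⬝ᵥ A.mulVec x) * B.det ≤ (x ⬝ᵥ B.mulVec x) * A.det) ∧
    (∀ x : Fin d → ℝ, x ≠ 0 →
      (x ⬝ᵥ A.mulVec x) / (x ⬝ᵥ B.mulVec x) ≤ A.det / B.det) := by
  have key := quadForm_mul_det_le hA.isHermitian hB hAB
  refine ⟨key, fun x hx => ?_⟩
  have hpos : 0 < x ⬝ᵥ B *ᵥ x := by simpa using hB.dotProduct_mulVec_pos hx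
  rw [div_le_div_iff₀ hpos hB.det_pos, mul_comm A.det]
  exact key x
end

section
/- Let A and B be d×d real symmetric positive definite matrices such that A − B is positive semidefinite and det(A) ≤ 2·det(B). Then for every x ∈ ℝ^d, xᵀ B⁻¹ x ≤ 2 · xᵀ A⁻¹ x. -/
/-!
The matrices `B` and `A` are simultaneously diagonalised by congruence: there is an invertible `P`
with `Pᵀ B P = 1` and `Pᵀ A P = diagonal (1 + e)`, where `e ≥ 0` because `A - B` is positive
semidefinite (`exists_simultaneous_diag`). Taking determinants, `∏ i, (1 + e i) = det A / det B ≤ 2`,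
and since every factor is at least `1`, each one is at most `2`. With `y = Pᵀ x` the two quadratic
forms are `xᵀ B⁻¹ x = ∑ yᵢ²` and `xᵀ A⁻¹ x = ∑ yᵢ² / (1 + eᵢ)`, so the claim holds termwise.
-/

open Matrix

/-- The columns of `P` form a `B`-orthonormal basis (`P Pᵀ = B⁻¹`) in which `C` is diagonal. It is
built from a factorisation `B⁻¹ = Qᵀ Q` and an orthogonal diagonalisation of `Q C Qᵀ`. -/
lemma exists_simultaneous_diag {d : ℕ} (B C : Matrix (Fin d) (Fin d) ℝ)
    (hB : B.PosDef) (hC : C.PosSemidef) :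
    ∃ (P : Matrix (Fin d) (Fin d) ℝ) (e : Fin d → ℝ), (∀ i, 0 ≤ e i) ∧
      P * Pᵀ = B⁻¹ ∧ Pᵀ * C * P = diagonal e := by
  obtain ⟨Q, hQ⟩ : ∃ Q : Matrix (Fin d) (Fin d) ℝ, B⁻¹ = Qᴴ * Q := by
    open scoped MatrixOrder in
    exact CStarAlgebra.nonneg_iff_eq_star_mul_self.mp hB.inv.posSemidef.nonneg
  have hM : (Q * C * Qᴴ).PosSemidef := hC.mul_mul_conjTranspose_same Q
  set U : Matrix (Fin d) (Fin d) ℝ := (hM.1.eigenvectorUnitary : Matrix (Fin d) (Fin d) ℝ) with hU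
  have hU1 : Uᵀ * U = 1 := by
    simpa [hU, star_eq_conjTranspose] using Unitary.coe_star_mul_self hM.1.eigenvectorUnitary
  have hU2 : U * Uᵀ = 1 := mul_eq_one_comm.mp hU1
  have hs : Q * C * Qᵀ = U * diagonal hM.1.eigenvalues * Uᵀ := by
    have h := hM.1.spectral_theorem
    rw [Unitary.conjStarAlgAut_apply] at h
    simpa [hU, star_eq_conjTranspose, Function.comp_def] using h
  refine ⟨Qᵀ * U, hM.1.eigenvalues, hM.eigenvalues_nonneg, ?_, ?_⟩
  · calc Qᵀ * U * (Qᵀ * U)ᵀ = Qᵀ * (U * Uᵀ) * Q := by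
          simp only [transpose_mul, transpose_transpose, Matrix.mul_assoc]
      _ = B⁻¹ := by rw [hU2, Matrix.mul_one, hQ, conjTranspose_eq_transpose_of_trivial]
  · calc (Qᵀ * U)ᵀ * C * (Qᵀ * U) = Uᵀ * (Q * C * Qᵀ) * U := by
          simp only [transpose_mul, transpose_transpose, Matrix.mul_assoc]
      _ = (Uᵀ * U) * diagonal hM.1.eigenvalues * (Uᵀ * U) := by
          rw [hs]; simp only [Matrix.mul_assoc]
      _ = _ := by rw [hU1, Matrix.one_mul, Matrix.mul_one]

/-- If `A ⪰ B ≻ 0` and `det A ≤ 2 det B` then `xᵀB⁻¹x ≤ 2 xᵀA⁻¹x`. -/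
theorem stmt1 (d : ℕ) (A B : Matrix (Fin d) (Fin d) ℝ)
    (hA : A.PosDef) (hB : B.PosDef) (hAB : (A - B).PosSemidef)
    (hdet : A.det ≤ 2 * B.det) :
    ∀ x : Fin d → ℝ, x ⬝ᵥ B⁻¹.mulVec x ≤ 2 * (x ⬝ᵥ A⁻¹.mulVec x) := by
  intro x
  obtain ⟨P, e, he, hPP, hPC⟩ := exists_simultaneous_diag B (A - B) hB hAB
  have hPB : Pᵀ * B * P = 1 := by
    rw [mul_eq_one_comm, ← Matrix.mul_assoc, hPP]
    exact Matrix.nonsing_inv_mul _ hB.det_pos.ne'.isUnit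
  have hPA : Pᵀ * A * P = diagonal (fun i => 1 + e i) := by
    have h : Pᵀ * A * P = Pᵀ * B * P + Pᵀ * (A - B) * P := by noncomm_ring
    rw [h, hPB, hPC, ← diagonal_one, diagonal_add]
  have hprod : ∏ i, (1 + e i) ≤ 2 := by
    have h1 := congrArg det hPB
    have h2 := congrArg det hPA
    simp only [det_mul, det_transpose, det_one, det_diagonal] at h1 h2
    rw [← h2]
    nlinarith [mul_le_mul_of_nonneg_left hdet (mul_self_nonneg P.det)]
  have hle : ∀ i, 1 + e i ≤ 2 := by
    intro i
    rw [← Finset.mul_prod_erase _ _ (Finset.mem_univ i)] at hprod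
    have h1 : 1 ≤ ∏ j ∈ Finset.univ.erase i, (1 + e j) :=
      Finset.one_le_prod fun j _ => by linarith [he j]
    exact (le_mul_of_one_le_right (by linarith [he i]) h1).trans hprod
  have hAinv : A⁻¹ = P * diagonal (fun i => (1 + e i)⁻¹) * Pᵀ := by
    apply Matrix.inv_eq_right_inv
    have h : Pᵀ * (A * P * diagonal (fun i => (1 + e i)⁻¹)) = 1 := by
      rw [← Matrix.mul_assoc, ← Matrix.mul_assoc, hPA, diagonal_mul_diagonal, ← diagonal_one]
      congr 1
      ext i
      exact mul_inv_cancel₀ (by linarith [he i])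
    rw [mul_eq_one_comm] at h
    simpa only [Matrix.mul_assoc] using h
  have key : ∀ D : Matrix (Fin d) (Fin d) ℝ,
      x ⬝ᵥ (P * D * Pᵀ) *ᵥ x = (Pᵀ *ᵥ x) ⬝ᵥ D *ᵥ (Pᵀ *ᵥ x) := by
    intro D
    rw [← mulVec_mulVec, ← mulVec_mulVec, dotProduct_mulVec, ← mulVec_transpose]
  have hBx : x ⬝ᵥ B⁻¹ *ᵥ x = (Pᵀ *ᵥ x) ⬝ᵥ (Pᵀ *ᵥ x) := by
    simpa [hPP] using key 1
  rw [hBx, hAinv, key]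
  simp only [dotProduct, mulVec_diagonal, Finset.mul_sum]
  refine Finset.sum_le_sum fun i _ => ?_
  have hpos : 0 < 1 + e i := by linarith [he i]
  have hinv : 1 ≤ 2 * (1 + e i)⁻¹ := by
    rw [← div_eq_mul_inv, le_div_iff₀ hpos]; linarith [hle i]
  nlinarith [mul_le_mul_of_nonneg_right hinv (mul_self_nonneg ((Pᵀ *ᵥ x) i))]
end
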